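/- For every x ∈ ℝ², the stable set of the linear automorphism S at π x is exactly the projected line through x in the contracting eigendirection: W^s_S(π x) = { π(x + t v₋) : t ∈ ℝ }. -/

import Mathlib

/-!
On `T²` the map `S` is `(a, b) ↦ (a + b, a)`, hence an injective group endomorphism, so
`d(Sⁿ y, Sⁿ ψ) = ‖Sⁿ (y - ψ)‖` and the stable set of `ψ` is the translate by `ψ` of the set of
`d ∈ T²` with `Sⁿ d → 0`.

If `d = π (t v₋)`, then `Sⁿ d = π (λ₋ⁿ t v₋) → 0`.

Conversely, let `Sⁿ d → 0`, and let `fₙ ∈ ℝ²` be the shortest lift of `Sⁿ d`. Once `Sⁿ d` stays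
within distance `1` of `0`, the vector `fₙ₊₁ - S₀ fₙ` is a point of `2πℤ²` with coordinates of
absolute value less than `3 < 2π`, so `fₙ₊₁ = S₀ fₙ` from some index `N` on. The coordinate
`λ₊ fₙ.1 + fₙ.2` along `v₊` is then multiplied by `λ₊ > 1` at each step but stays bounded, so it
vanishes and `f_N` is a multiple of `v₋` (`mem_stable_line_of_bounded_orbit`). Thus `S^N d` lies in
`π (ℝ v₋)`, and since `S` is injective and maps `π (ℝ v₋)` onto itself, so does `d`.
-/

noncomputable section
open Real Filter Metric

/-- The two–torus `ℝ²/(2πℤ²)`. -/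
abbrev T2 := AddCircle (2 * Real.pi) × AddCircle (2 * Real.pi)

/-- The quotient map `π : ℝ² → T²`. -/
def pr2 : ℝ × ℝ → T2 := fun p => ((p.1 : AddCircle (2 * Real.pi)), (p.2 : AddCircle (2 * Real.pi)))

/-- The matrix `[[1,1],[1,0]]` acting on `ℝ²`. -/
def S0 : ℝ × ℝ → ℝ × ℝ := fun p => (p.1 + p.2, p.1)

def lamP : ℝ := (1 + Real.sqrt 5) / 2
def lamM : ℝ := (1 - Real.sqrt 5) / 2

/-- Unit eigenvector of `S0` proportional to `(λ₊, 1)`. -/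
def vP : ℝ × ℝ := (lamP / Real.sqrt (lamP ^ 2 + 1), 1 / Real.sqrt (lamP ^ 2 + 1))
/-- Unit eigenvector of `S0` proportional to `(λ₋, 1)`. -/
def vM : ℝ × ℝ := (lamM / Real.sqrt (lamM ^ 2 + 1), 1 / Real.sqrt (lamM ^ 2 + 1))

/-- Euclidean dot product on `ℝ²`. -/
def dot (a b : ℝ × ℝ) : ℝ := a.1 * b.1 + a.2 * b.2

/-- `g : ℝ² → ℝ` is a (real-valued) trigonometric polynomial. -/
def IsTrigPoly (g : ℝ × ℝ → ℝ) : Prop :=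
  ∃ (s : Finset (ℤ × ℤ)) (c : ℤ × ℤ → ℂ), ∀ p : ℝ × ℝ,
    (g p : ℂ) = ∑ n ∈ s, c n * Complex.exp (Complex.I * ((n.1 : ℂ) * p.1 + (n.2 : ℂ) * p.2))


theorem lamM_eq : lamM = 1 - lamP := by
  unfold lamM lamP; ring

theorem lamP_sq : lamP ^ 2 = lamP + 1 := by
  have h : Real.sqrt 5 ^ 2 = 5 := Real.sq_sqrt (by norm_num)
  unfold lamP; nlinarith

theorem one_lt_lamP : 1 < lamP := by
  have h : (1 : ℝ) < Real.sqrt 5 := by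
    rw [Real.lt_sqrt] <;> norm_num
  unfold lamP; linarith

theorem lamP_lt_two : lamP < 2 := by
  nlinarith [lamP_sq, one_lt_lamP]

theorem lamM_ne_zero : lamM ≠ 0 := by
  rw [lamM_eq]; linarith [one_lt_lamP]

theorem abs_lamM_lt_one : |lamM| < 1 := by
  rw [lamM_eq, abs_lt]
  constructor <;> linarith [one_lt_lamP, lamP_lt_two]

theorem S0_smul_vM (t : ℝ) : S0 (t • vM) = (lamM * t) • vM := by
  have h : lamM ^ 2 = lamM + 1 := by rw [lamM_eq]; nlinarith [lamP_sq]
  ext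
  · simp only [S0, vM, Prod.smul_mk, smul_eq_mul]
    linear_combination (-t / Real.sqrt (lamM ^ 2 + 1)) * h
  · simp only [S0, vM, Prod.smul_mk, smul_eq_mul]
    ring

theorem pr2_add (a b : ℝ × ℝ) : pr2 (a + b) = pr2 a + pr2 b := by
  simp [pr2]

theorem pr2_zero : pr2 0 = 0 := by
  simp [pr2]

theorem continuous_pr2 : Continuous pr2 :=
  ((AddCircle.continuous_mk' _).comp continuous_fst).prodMk
    ((AddCircle.continuous_mk' _).comp continuous_snd)

theorem exists_pr2_eq (y : T2) : ∃ p, pr2 p = y := by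
  obtain ⟨a, b⟩ := y
  obtain ⟨a, rfl⟩ := QuotientAddGroup.mk_surjective a
  obtain ⟨b, rfl⟩ := QuotientAddGroup.mk_surjective b
  exact ⟨(a, b), rfl⟩

theorem exists_lift_abs_eq_norm (u : AddCircle (2 * Real.pi)) :
    ∃ r : ℝ, (r : AddCircle (2 * Real.pi)) = u ∧ |r| = ‖u‖ := by
  obtain ⟨a, rfl⟩ := QuotientAddGroup.mk_surjective u
  refine ⟨a - round ((2 * Real.pi)⁻¹ * a) * (2 * Real.pi), ?_, (AddCircle.norm_eq _).symm⟩
  rw [AddCircle.coe_sub, ← zsmul_eq_mul, AddCircle.coe_zsmul, AddCircle.coe_period, smul_zero,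
    sub_zero]

theorem eq_zero_of_coe_eq_zero {r : ℝ} (h : (r : AddCircle (2 * Real.pi)) = 0) (hr : |r| ≤ 3) :
    r = 0 := by
  have hpi := Real.pi_gt_three
  have h1 := (AddCircle.norm_coe_eq_abs_iff (2 * Real.pi) (x := r) (by positivity)).2
    (by rw [abs_of_pos (by positivity : (0 : ℝ) < 2 * Real.pi)]; linarith)
  rw [h, norm_zero] at h1
  exact abs_eq_zero.1 h1.symm

/-- A bounded forward `S0`-orbit starts on the contracting line, as its `v₊`-coordinate is
multiplied by `lamP > 1` at each step. -/
theorem mem_stable_line_of_bounded_orbit (f : ℕ → ℝ × ℝ) (hf : ∀ n, f (n + 1) = S0 (f n))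
    (hb : ∀ n, |(f n).1| < 1 ∧ |(f n).2| < 1) : ∃ t : ℝ, f 0 = t • vM := by
  have hP := one_lt_lamP
  have hc : ∀ n, lamP * (f n).1 + (f n).2 = lamP ^ n * (lamP * (f 0).1 + (f 0).2) := by
    intro n
    induction n with
    | zero => simp
    | succ n ih =>
      rw [hf, pow_succ', mul_assoc, ← ih]
      simp only [S0]
      linear_combination (-(f n).1) * lamP_sq
  have h0 : lamP * (f 0).1 + (f 0).2 = 0 := by
    by_contra hne
    have hpos : 0 < |lamP * (f 0).1 + (f 0).2| := abs_pos.2 hne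
    obtain ⟨n, hn⟩ := pow_unbounded_of_one_lt (3 / |lamP * (f 0).1 + (f 0).2|) hP
    rw [div_lt_iff₀ hpos] at hn
    have h1 : |lamP * (f n).1 + (f n).2| = lamP ^ n * |lamP * (f 0).1 + (f 0).2| := by
      rw [hc, abs_mul, abs_of_pos (by positivity)]
    have h2 : |lamP * (f n).1 + (f n).2| ≤ lamP * |(f n).1| + |(f n).2| := by
      refine (abs_add_le _ _).trans_eq ?_
      rw [abs_mul, abs_of_pos (by linarith : 0 < lamP)]
    nlinarith [hb n, lamP_lt_two]
  have hs : Real.sqrt (lamM ^ 2 + 1) ≠ 0 := by positivity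
  refine ⟨(f 0).2 * Real.sqrt (lamM ^ 2 + 1), ?_⟩
  ext
  · simp only [vM, Prod.smul_mk, smul_eq_mul]
    field_simp
    rw [lamM_eq]
    linear_combination (lamP - 1) * h0 - (f 0).1 * lamP_sq
  · simp only [vM, Prod.smul_mk, smul_eq_mul]
    field_simp

theorem S_apply {S : T2 → T2} (hS : ∀ x : ℝ × ℝ, S (pr2 x) = pr2 (S0 x))
    (y : T2) : S y = (y.1 + y.2, y.1) := by
  obtain ⟨p, rfl⟩ := exists_pr2_eq y
  rw [hS]
  simp [pr2, S0]

theorem S_injective {S : T2 → T2} (hS : ∀ x : ℝ × ℝ, S (pr2 x) = pr2 (S0 x))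
    : Function.Injective S := by
  intro a b h
  rw [S_apply hS, S_apply hS, Prod.mk.injEq] at h
  obtain ⟨h1, h2⟩ := h
  rw [h2] at h1
  exact Prod.ext h2 (add_left_cancel h1)

theorem iterate_S_sub {S : T2 → T2} (hS : ∀ x : ℝ × ℝ, S (pr2 x) = pr2 (S0 x))
    (a b : T2) (n : ℕ) : S^[n] (a - b) = S^[n] a - S^[n] b := by
  induction n with
  | zero => rfl
  | succ n ih =>
    simp only [Function.iterate_succ_apply', ih]
    rw [S_apply hS, S_apply hS, S_apply hS]
    ext
    · simp only [Prod.fst_sub, Prod.snd_sub]; abel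
    · simp

theorem iterate_S_line {S : T2 → T2} (hS : ∀ x : ℝ × ℝ, S (pr2 x) = pr2 (S0 x))
    (t : ℝ) (n : ℕ) : S^[n] (pr2 (t • vM)) = pr2 ((lamM ^ n * t) • vM) := by
  induction n with
  | zero => simp
  | succ n ih => rw [Function.iterate_succ_apply', ih, hS, S0_smul_vM, pow_succ', mul_assoc]

theorem mem_line_of_iterate {S : T2 → T2} (hS : ∀ x : ℝ × ℝ, S (pr2 x) = pr2 (S0 x))
    {d : T2} {n : ℕ} {t : ℝ} (h : S^[n] d = pr2 (t • vM)) :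
    ∃ s : ℝ, d = pr2 (s • vM) := by
  refine ⟨t / lamM ^ n, (S_injective hS).iterate n ?_⟩
  rw [h, iterate_S_line hS, mul_div_cancel₀ _ (pow_ne_zero n lamM_ne_zero)]

/-- The stable set of the fixed point `0` is contained in the projected contracting line. -/
theorem mem_line_of_tendsto {S : T2 → T2} (hS : ∀ x : ℝ × ℝ, S (pr2 x) = pr2 (S0 x))
    {d : T2} (h : Tendsto (fun n => ‖S^[n] d‖) atTop (nhds 0)) :
    ∃ t : ℝ, d = pr2 (t • vM) := by
  obtain ⟨N, hN⟩ := eventually_atTop.1 (h.eventually_lt_const one_pos)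
  choose r hr hrn using exists_lift_abs_eq_norm
  let u : ℕ → T2 := fun n => S^[N + n] d
  have hu : ∀ n, u (n + 1) = ((u n).1 + (u n).2, (u n).1) := fun n => by
    rw [← S_apply hS]
    exact Function.iterate_succ_apply' S (N + n) d
  have hb : ∀ n, |r (u n).1| < 1 ∧ |r (u n).2| < 1 := fun n => by
    have h1 : ‖u n‖ < 1 := hN (N + n) (by omega)
    rw [hrn, hrn]
    exact ⟨(norm_fst_le _).trans_lt h1, (norm_snd_le _).trans_lt h1⟩
  obtain ⟨t, ht⟩ := mem_stable_line_of_bounded_orbit (fun n => (r (u n).1, r (u n).2))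
    (fun n => by
      have h1 := (hb (n + 1)).1
      obtain ⟨h2, h3⟩ := hb n
      ext
      · simp only [S0]
        refine sub_eq_zero.1 (eq_zero_of_coe_eq_zero ?_ ?_)
        · rw [AddCircle.coe_sub, AddCircle.coe_add, hr, hr, hr, hu, sub_self]
        · rw [abs_lt] at h1 h2 h3
          rw [abs_le]
          constructor <;> linarith
      · simp only [S0, hu])
    hb
  refine mem_line_of_iterate hS (n := N) (t := t) ?_
  rw [← ht]
  simp only [pr2, hr]
  rfl

theorem stmt4
    (S : T2 → T2) (hS : ∀ x : ℝ × ℝ, S (pr2 x) = pr2 (S0 x)) :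
    ∀ x : ℝ × ℝ,
      {y : T2 | Filter.Tendsto (fun n : ℕ => dist (S^[n] y) (S^[n] (pr2 x))) atTop (nhds 0)}
        = {y : T2 | ∃ t : ℝ, y = pr2 (x + t • vM)} := by
  intro x
  ext y
  have hd : ∀ n, dist (S^[n] y) (S^[n] (pr2 x)) = ‖S^[n] (y - pr2 x)‖ := fun n => by
    rw [dist_eq_norm, iterate_S_sub hS]
  simp only [Set.mem_ofPred_eq, hd]
  constructor
  · intro h
    obtain ⟨t, ht⟩ := mem_line_of_tendsto hS h
    exact ⟨t, by rw [pr2_add, ← ht, add_sub_cancel]⟩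
  · rintro ⟨t, rfl⟩
    simp only [pr2_add, add_sub_cancel_left, iterate_S_line hS]
    have h1 : Tendsto (fun n : ℕ => (lamM ^ n * t) • vM) atTop (nhds 0) := by
      have h2 := ((tendsto_pow_atTop_nhds_zero_of_abs_lt_one abs_lamM_lt_one).mul_const
        t).smul_const vM
      simpa only [zero_mul, zero_smul] using h2
    have h3 := ((continuous_norm.comp continuous_pr2).tendsto 0).comp h1
    simpa [Function.comp_def, pr2_zero] using h3
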